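/- Fix a natural number k ≥ 1, let z ∈ ℂ^{k+1} satisfy ψ(z) ≠ 0, and let τ ∈ ℂ. Suppose v, w ∈ ℂ^{k+1} satisfy: the real Fréchet derivative of F_i at z vanishes on v and on w for every i ∈ Fin k, and there exist real numbers s, s' such that the real Fréchet derivative of ψ at z sends v to s·τ and w to s'·τ. Then ω(v, w) = 0. (This is the pointwise content of Proposition 1.1: for any couple (c_1,…,c_k) of non-critical values and any smooth loop γ ⊂ ℂ not passing through the origin, the torus S_{γ,(c_1,…,c_k)} = ⋃_{a ∈ γ} S^a_{(c_1,…,c_k)} — whose tangent space at z consists exactly of such vectors, with τ a tangent vector of γ at ψ(z) — is a lagrangian torus in ℂ^{k+1}.) -/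

import Mathlib

noncomputable section

/-- The standard symplectic form on `ℂ^n`: `ω(v, w) = Σ_m Im(conj (v m) * w m)`. -/
def omegaStd {n : ℕ} (v w : Fin n → ℂ) : ℝ :=
  ∑ m, ((starRingEnd ℂ) (v m) * w m).im

/-- The fibration `ψ(z) = z_1 ⋯ z_{k+1}`, viewed as a smooth map of real vector spaces. -/
def psiFib {k : ℕ} (z : Fin (k + 1) → ℂ) : ℂ := ∏ m, z m

/-- The commuting functions `F_i(z) = ‖z i‖² − ‖z (i+1)‖²`. -/
def Ffun {k : ℕ} (i : Fin k) (z : Fin (k + 1) → ℂ) : ℝ :=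
  ‖z i.castSucc‖ ^ 2 - ‖z i.succ‖ ^ 2

/-- The real derivative of `F_i` at `z` in terms of the real inner products
`⟪z_m, v_m⟫ = Re (conj z_m * v_m)`. -/
lemma fderiv_Ffun_apply {k : ℕ} (i : Fin k) (z v : Fin (k + 1) → ℂ) :
    fderiv ℝ (Ffun i) z v =
      2 * inner ℝ (z i.castSucc) (v i.castSucc) - 2 * inner ℝ (z i.succ) (v i.succ) := by
  have h (m : Fin (k + 1)) :=
    (hasFDerivAt_apply (𝕜 := ℝ) (F' := fun _ : Fin (k + 1) => ℂ) m z).norm_sq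
  have hF : HasFDerivAt (Ffun i) _ z := (h i.castSucc).sub (h i.succ)
  rw [hF.fderiv]
  simp
  ring

/-- The logarithmic derivative of `ψ`: where `ψ z ≠ 0`, `dψ_z(v) = ψ(z) * Σ_m v_m / z_m`. -/
lemma fderiv_psiFib_apply {k : ℕ} {z : Fin (k + 1) → ℂ} (hz : ∀ m, z m ≠ 0)
    (v : Fin (k + 1) → ℂ) :
    fderiv ℝ psiFib z v = psiFib z * ∑ m, v m / z m := by
  have hψ : HasFDerivAt (psiFib (k := k)) _ z :=
    hasFDerivAt_finsetProd (𝕜 := ℝ) (u := Finset.univ) (x := z)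
  rw [hψ.fderiv, Finset.mul_sum]
  simp only [sum_apply, smul_apply, ContinuousLinearMap.proj_apply, smul_eq_mul]
  refine Finset.sum_congr rfl fun m _ => ?_
  rw [psiFib, ← Finset.mul_prod_erase _ _ (Finset.mem_univ m)]
  field_simp [hz m]

/-- If all `dF_i` vanish on `v`, then `Re (conj z_m * v_m)` does not depend on `m`. -/
lemma inner_eq_inner_zero_of_fderiv_Ffun_eq_zero {k : ℕ} {z v : Fin (k + 1) → ℂ}
    (h : ∀ i : Fin k, fderiv ℝ (Ffun i) z v = 0) (m : Fin (k + 1)) :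
    inner ℝ (z m) (v m) = inner ℝ (z 0) (v 0) := by
  induction m using Fin.induction with
  | zero => rfl
  | succ i ih =>
    have hi := h i
    rw [fderiv_Ffun_apply] at hi
    linarith

/-- The real part of `v / z` is `Re (conj z * v) / |z|²`. -/
lemma div_re_eq_inner_mul_inv_normSq (v z : ℂ) :
    (v / z).re = inner ℝ z v * (Complex.normSq z)⁻¹ := by
  rw [Complex.div_re, Complex.inner, Complex.mul_re, Complex.conj_re, Complex.conj_im]
  ring

/-- The symplectic pairing on a line `ℂ`, in the logarithmic coordinates `v / z`, `w / z`. -/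
lemma conj_mul_im_eq_inner_mul_div_im {z : ℂ} (hz : z ≠ 0) (v w : ℂ) :
    (starRingEnd ℂ v * w).im = inner ℝ z v * (w / z).im - inner ℝ z w * (v / z).im := by
  have h : z.re ^ 2 + z.im ^ 2 ≠ 0 := by
    simpa only [Complex.normSq_apply, ← sq] using Complex.normSq_pos.mpr hz |>.ne'
  simp only [Complex.div_im, Complex.inner, Complex.mul_re, Complex.mul_im, Complex.conj_re,
    Complex.conj_im, Complex.normSq_apply, ← sq]
  field_simp
  ring

/-- pointwise content of Proposition 1.1: at a point `z` with `ψ(z) ≠ 0`,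
any two vectors annihilated by all `d(F_i)_z` and sent by `dψ_z` to real multiples of a
fixed `τ ∈ ℂ` (a tangent vector of the base loop `γ` at `ψ(z)`) are `ω`-orthogonal;
hence the torus `S_{γ,(c_1,…,c_k)}` is lagrangian in `ℂ^{k+1}`. -/
theorem stmt_9 (k : ℕ) (hk : 1 ≤ k) (z : Fin (k + 1) → ℂ) (hz : psiFib z ≠ 0) (τ : ℂ)
    (v w : Fin (k + 1) → ℂ)
    (hvF : ∀ i : Fin k, fderiv ℝ (Ffun i) z v = 0)
    (hwF : ∀ i : Fin k, fderiv ℝ (Ffun i) z w = 0)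
    (hv : ∃ s : ℝ, fderiv ℝ psiFib z v = s • τ)
    (hw : ∃ s' : ℝ, fderiv ℝ psiFib z w = s' • τ) :
    omegaStd v w = 0 := by
  have hzm (m : Fin (k + 1)) : z m ≠ 0 := fun h =>
    hz (Finset.prod_eq_zero (Finset.mem_univ m) h)
  obtain ⟨s, hs⟩ := hv
  obtain ⟨t, ht⟩ := hw
  rw [fderiv_psiFib_apply hzm] at hs ht
  have hvm := inner_eq_inner_zero_of_fderiv_Ffun_eq_zero hvF
  have hwm := inner_eq_inner_zero_of_fderiv_Ffun_eq_zero hwF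
  set c : ℝ := inner ℝ (z 0) (v 0)
  set d : ℝ := inner ℝ (z 0) (w 0)
  set A : ℂ := ∑ m, v m / z m with hA
  set B : ℂ := ∑ m, w m / z m with hB
  set R : ℝ := ∑ m, (Complex.normSq (z m))⁻¹ with hR
  have hAs : A = s • (τ / psiFib z) := by
    rw [← smul_div_assoc, ← hs, mul_div_cancel_left₀ _ hz]
  have hBt : B = t • (τ / psiFib z) := by
    rw [← smul_div_assoc, ← ht, mul_div_cancel_left₀ _ hz]
  have hAre : A.re = c * R := by
    simp only [hA, hR, Complex.re_sum, div_re_eq_inner_mul_inv_normSq, hvm, Finset.mul_sum]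
  have hBre : B.re = d * R := by
    simp only [hB, hR, Complex.re_sum, div_re_eq_inner_mul_inv_normSq, hwm, Finset.mul_sum]
  have hω : omegaStd v w = c * B.im - d * A.im := by
    simp only [omegaStd, fun m => conj_mul_im_eq_inner_mul_div_im (hzm m) (v m) (w m), hvm, hwm,
      hA, hB, Complex.im_sum, Finset.sum_sub_distrib, Finset.mul_sum]
  have hRpos : 0 < R :=
    Finset.sum_pos (fun m _ => inv_pos.mpr (Complex.normSq_pos.mpr (hzm m)))
      Finset.univ_nonempty
  have hAB : A.re * B.im - B.re * A.im = 0 := by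
    rw [hAs, hBt]
    simp only [Complex.smul_re, Complex.smul_im, smul_eq_mul]
    ring
  have hRω : R * omegaStd v w = 0 := by
    rw [hω, ← hAB, hAre, hBre]
    ring
  exact (mul_eq_zero.mp hRω).resolve_left hRpos.ne'
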